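/- arXiv:2404.06768 — 2 statements merged into one kernel-verified Lean document; each statement's English description precedes it below -/
import Mathlib

section
/- Let n = 2t be an even integer with n ≥ 6, let s be an integer with 1 ≤ s ≤ 3^{t−2}, and let W_1, …, W_s be pairwise disjoint t-dimensional F_3-linear subspaces of F_3^n. Then for the code C_f associated to the characteristic function f: the minimum Hamming weight of a nonzero codeword of C_f equals s(3^t − 1), the maximum Hamming weight of a codeword of C_f equals 2·3^{n−1} + 3^t − s, and 3·s(3^t − 1) ≤ 2·3^{n−1} + 3^t − s; in particular wt_min/wt_max ≤ 1/3 < 2/3, so C_f violates the Ashikhmin–Barg sufficient condition for minimality. -/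
open Matrix Finset

/-!
Write `q = |F|`. A codeword `α f + φ` with `α ≠ 0` differs from the functional `φ` only at nonzero
vectors of the `W k`. If `φ` does not vanish on `W k`, then `α + φ` and `φ` have equally many zeros
on `W k`, as one is a translate of the other; if it does, then `α + φ` has no zeros on `W k` and `φ`
has only zeros. As `f 0 = 0`, passing from `φ` to `α f + φ` thus adds `q ^ t - 1` to the weight for
each `k` with `W k ≤ ker φ` and subtracts `1` for every other `k`. Any two of the `W k` span the
space, so a nonzero `φ` vanishes on at most one of them, which leaves few weights to compare.
-/

open Module LinearMap

section Hamming

variable {X ι F : Type*} [Fintype X] [Zero F] [DecidableEq F]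

lemma hammingNorm_update_zero_add_one [DecidableEq X] {g : X → F} {x : X} (hx : g x ≠ 0) :
    hammingNorm (Function.update g x 0) + 1 = hammingNorm g := by
  have support_update : ({y | Function.update g x 0 y ≠ 0} : Finset X) =
      ({y | g y ≠ 0} : Finset X).erase x := by
    ext y
    by_cases hy : y = x <;> simp [hy]
  rw [hammingNorm, support_update, card_erase_add_one (by simpa using hx), hammingNorm]

lemma hammingNorm_subtype {p : X → Prop} [Fintype {x // p x}] {g : X → F}
    (hg : ∀ x, ¬ p x → g x = 0) :
    hammingNorm (fun x : {x // p x} ↦ g x) = hammingNorm g := by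
  refine card_bij (fun x _ ↦ x.1) (by simp) (fun _ _ _ _ h ↦ Subtype.ext h) fun x hx ↦ ?_
  have hgx : g x ≠ 0 := by simpa using hx
  exact ⟨⟨x, not_imp_comm.mp (hg x) hgx⟩, by simpa using hgx, rfl⟩

variable [Fintype ι] {p : ι → X → Prop} [∀ k, Fintype {x // p k x}]

lemma sum_eq_sum_sum_subtype_of_existsUnique {M : Type*} [AddCommMonoid M] {g : X → M}
    (hg : ∀ x, g x ≠ 0 → ∃! k, p k x) :
    ∑ x, g x = ∑ k, ∑ x : {x // p k x}, g x := by
  classical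
  have sum_subtype (k : ι) : ∑ x : {x // p k x}, g x = ∑ x, if p k x then g x else 0 := by
    rw [← sum_filter, Finset.sum_subtype (p := p k) _ (by simp)]
  simp_rw [sum_subtype]
  rw [sum_comm]
  refine sum_congr rfl fun x _ ↦ ?_
  by_cases hx : g x = 0
  · simp [hx]
  · obtain ⟨k, hk, unique⟩ := hg x hx
    rw [Fintype.sum_eq_single k fun j hj ↦ if_neg fun hjx ↦ hj (unique j hjx), if_pos hk]

lemma hammingNorm_sub_hammingNorm_eq_sum {g h : X → F} (hgh : ∀ x, g x ≠ h x → ∃! k, p k x) :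
    (hammingNorm g - hammingNorm h : ℤ) =
      ∑ k, ((hammingNorm fun x : {x // p k x} ↦ g x : ℤ) -
        hammingNorm fun x : {x // p k x} ↦ h x) := by
  simp only [hammingNorm, natCast_card_filter, ← sum_sub_distrib]
  refine sum_eq_sum_sum_subtype_of_existsUnique
    (g := fun x ↦ (if g x ≠ 0 then 1 else 0 : ℤ) - if h x ≠ 0 then 1 else 0) fun x hx ↦ hgh x ?_
  contrapose! hx
  simp [hx]

end Hamming

section Functionals

variable {F V ι : Type*} [Field F] [AddCommGroup V] [Module F V]

lemma hammingNorm_const_add_dual [Fintype V] [DecidableEq F] {φ : Dual F V} (hφ : φ ≠ 0) (a : F) :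
    hammingNorm (fun x ↦ a + φ x) = hammingNorm φ := by
  obtain ⟨v, rfl⟩ := LinearMap.surjective hφ a
  exact card_equiv (Equiv.addLeft v) (by simp)

lemma hammingNorm_dual [Fintype V] [DecidableEq F] [Fintype F] {φ : Dual F V} (hφ : φ ≠ 0) :
    hammingNorm φ = (Fintype.card F - 1) * Fintype.card F ^ (finrank F V - 1) := by
  classical
  have finrank_ker : finrank F (ker φ) + 1 = finrank F V :=
    Dual.finrank_ker_add_one_of_ne_zero hφ
  have card_zeros : #{x | φ x = 0} = Fintype.card F ^ finrank F (ker φ) := by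
    rw [← Module.card_eq_pow_finrank, ← Fintype.card_subtype]
    exact Fintype.card_congr (Equiv.refl _)
  have card_zeros_add : #{x | φ x = 0} + hammingNorm φ = Fintype.card V :=
    card_filter_add_card_filter_not _
  rw [card_zeros, Module.card_eq_pow_finrank (K := F) (V := V), ← finrank_ker, pow_succ']
    at card_zeros_add
  rw [← finrank_ker, Nat.add_sub_cancel, Nat.sub_mul, one_mul]
  lia

lemma pairwise_codisjoint_of_finrank_le_two_mul [FiniteDimensional F V] {W : ι → Submodule F V}
    {t : ℕ} (hV : finrank F V ≤ 2 * t) (hdim : ∀ k, finrank F (W k) = t)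
    (hdisj : Pairwise (Function.onFun Disjoint W)) :
    Pairwise (Function.onFun Codisjoint W) := fun i j hij ↦
  codisjoint_iff.mpr <| Submodule.eq_top_of_disjoint _ _ (by rw [hdim, hdim]; lia) (hdisj hij)

open Classical in
lemma card_le_ker_le_one_of_pairwise_codisjoint [Fintype ι] {W : ι → Submodule F V}
    (hW : Pairwise (Function.onFun Codisjoint W)) {φ : Dual F V} (hφ : φ ≠ 0) :
    #{k | W k ≤ ker φ} ≤ 1 := by
  refine card_le_one.mpr fun i hi j hj ↦ ?_
  rw [mem_filter_univ] at hi hj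
  by_contra hij
  exact hφ (ker_eq_top.mp (top_unique (hW hij hi hj)))

open Classical in
lemma exists_dual_card_le_ker_eq_one [Fintype ι] {W : ι → Submodule F V}
    (hW : Pairwise (Function.onFun Codisjoint W)) {k : ι} (hk : W k < ⊤) :
    ∃ φ : Dual F V, φ ≠ 0 ∧ #{k | W k ≤ ker φ} = 1 := by
  obtain ⟨φ, hφ, hker⟩ := (W k).exists_le_ker_of_lt_top hk
  have one_le : 1 ≤ #{k | W k ≤ ker φ} := card_pos.mpr ⟨k, by simpa using hker⟩
  exact ⟨φ, hφ, (card_le_ker_le_one_of_pairwise_codisjoint hW hφ).antisymm one_le⟩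

end Functionals

section Arithmetic

variable {b m t : ℕ}

lemma mul_pow_le_mul_pow_of_le_mul_pow {a : ℕ} (ht : 0 < t) (hm : m ≤ a * b ^ (t - 1)) :
    m * b ^ t ≤ a * b ^ (2 * t - 1) := by
  calc m * b ^ t ≤ a * b ^ (t - 1) * b ^ t := by gcongr
    _ = a * b ^ (2 * t - 1) := by rw [mul_assoc, ← pow_add]; congr; lia

lemma le_pow_of_le_sub_one_mul_pow (ht : 0 < t) (hm : m ≤ (b - 1) * b ^ (t - 1)) :
    m ≤ b ^ t := by
  calc m ≤ b * b ^ (t - 1) := hm.trans (by gcongr; lia)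
    _ = b ^ t := mul_pow_sub_one ht.ne' b

lemma mul_mul_pow_sub_one_le (ht : 2 ≤ t) (hb : 0 < b) (hm : m ≤ (b - 1) * b ^ (t - 2)) :
    b * (m * (b ^ t - 1)) ≤ (b - 1) * b ^ (2 * t - 1) + b ^ t - m := by
  have hbm : b * m ≤ (b - 1) * b ^ (t - 1) := by
    calc b * m ≤ b * ((b - 1) * b ^ (t - 2)) := by gcongr
      _ = (b - 1) * b ^ (t - 1) := by
        rw [show t - 1 = t - 2 + 1 by lia, pow_succ']
        ring
  have hbm_mul := mul_pow_le_mul_pow_of_le_mul_pow (by lia) hbm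
  have hm_le : m ≤ b * m := Nat.le_mul_of_pos_left m hb
  rw [← mul_assoc, Nat.mul_sub_one]
  lia

end Arithmetic

section Code

variable {F V ι : Type*} [Field F] [AddCommGroup V] [Module F V]

open Classical in
/-- The characteristic function, with values in `F`, of the set of nonzero vectors lying in some
member of the family `W`. -/
noncomputable def nonzeroUnionIndicator (W : ι → Submodule F V) (x : V) : F :=
  if x ≠ 0 ∧ ∃ k, x ∈ W k then 1 else 0

/-- The codeword `c_{α,φ}` of a function `f`, indexed by the nonzero vectors. A linear functional
`φ` plays the role of the dot product with a vector `w`. -/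
def functionCodeword (f : V → F) (α : F) (φ : Dual F V) : {x : V // x ≠ 0} → F :=
  fun x ↦ α * f x + φ x

/-- The code `C_f` of all codewords of a function `f`. -/
def functionCode (f : V → F) : Set ({x : V // x ≠ 0} → F) :=
  {c | ∃ α φ, c = functionCodeword f α φ}

lemma functionCode_eq_setOf_dotProduct {n : Type*} [Fintype n] (f : (n → F) → F) :
    functionCode f = {c | ∃ (α : F) (w : n → F), c = fun x ↦ α * f x.1 + w ⬝ᵥ x.1} := by
  classical
  ext c
  exact exists_congr fun α ↦ (dotProductEquiv F n).surjective.exists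

lemma functionCodeword_zero_zero (f : V → F) : functionCodeword f 0 0 = 0 := by
  ext x
  simp [functionCodeword]

variable {W : ι → Submodule F V}

lemma nonzeroUnionIndicator_zero : nonzeroUnionIndicator W 0 = 0 := by
  simp [nonzeroUnionIndicator]

lemma eq_nonzeroUnionIndicator {f : V → F} (hf_one : ∀ x k, x ≠ 0 → x ∈ W k → f x = 1)
    (hf_zero : ∀ x, (x = 0 ∨ ∀ k, x ∉ W k) → f x = 0) : f = nonzeroUnionIndicator W := by
  ext x
  rw [nonzeroUnionIndicator]
  split_ifs with hx
  · obtain ⟨hx0, k, hk⟩ := hx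
    exact hf_one x k hx0 hk
  · exact hf_zero x (by grind)

lemma existsUnique_mem_of_nonzeroUnionIndicator_ne_zero
    (hdisj : Pairwise (Function.onFun Disjoint W)) {x : V} (hx : nonzeroUnionIndicator W x ≠ 0) :
    ∃! k, x ∈ W k := by
  obtain ⟨hx0, k, hk⟩ : x ≠ 0 ∧ ∃ k, x ∈ W k := by
    contrapose! hx
    exact if_neg (by grind)
  refine ⟨k, hk, fun j hj ↦ ?_⟩
  by_contra hjk
  exact hx0 (Submodule.disjoint_def.mp (hdisj hjk) x hj hk)

variable [DecidableEq F]

open Classical in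
lemma hammingNorm_mul_nonzeroUnionIndicator_add_dual_restrict {α : F} (hα : α ≠ 0)
    (φ : Dual F V) (k : ι) [Fintype (W k)] :
    (hammingNorm fun x : W k ↦ α * nonzeroUnionIndicator W x + φ x) + 1 =
      (hammingNorm fun x : W k ↦ φ x) + if W k ≤ ker φ then Fintype.card (W k) else 0 := by
  have eq_update : (fun x : W k ↦ α * nonzeroUnionIndicator W x + φ x) =
      Function.update (fun x : W k ↦ α + φ x) 0 0 := by
    ext x
    by_cases hx : x = 0
    · simp [hx, nonzeroUnionIndicator_zero]
    · have hmem : (x : V) ≠ 0 ∧ ∃ j, (x : V) ∈ W j := ⟨by simpa using hx, k, x.2⟩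
      rw [nonzeroUnionIndicator, if_pos hmem, mul_one, Function.update_of_ne hx]
  rw [eq_update, hammingNorm_update_zero_add_one (by simpa using hα)]
  split_ifs with hker
  · have hφ (x : W k) : φ x = 0 := hker x.2
    simp [hφ, hammingNorm, hα]
  · refine hammingNorm_const_add_dual (φ := φ.domRestrict (W k)) ?_ α
    contrapose! hker
    exact fun x hx ↦ LinearMap.congr_fun hker ⟨x, hx⟩

variable [Fintype V] [DecidableEq V]

lemma hammingNorm_functionCodeword {f : V → F} (hf : f 0 = 0) (α : F) (φ : Dual F V) :
    hammingNorm (functionCodeword f α φ) = hammingNorm fun x ↦ α * f x + φ x :=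
  hammingNorm_subtype (g := fun x ↦ α * f x + φ x) fun x hx ↦ by simp [not_not.mp hx, hf]

lemma hammingNorm_functionCodeword_zero_left (f : V → F) (φ : Dual F V) :
    hammingNorm (functionCodeword f 0 φ) = hammingNorm φ := by
  have eq_restrict : functionCodeword f 0 φ = fun x ↦ φ x.1 := by
    ext x
    simp [functionCodeword]
  rw [eq_restrict]
  exact hammingNorm_subtype fun x hx ↦ by simp [not_not.mp hx]

variable [Fintype ι]

open Classical in
lemma hammingNorm_functionCodeword_add_card (hdisj : Pairwise (Function.onFun Disjoint W))
    {α : F} (hα : α ≠ 0) (φ : Dual F V) :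
    hammingNorm (functionCodeword (nonzeroUnionIndicator W) α φ) + Fintype.card ι =
      hammingNorm φ + ∑ k with W k ≤ ker φ, Fintype.card (W k) := by
  have weight_sub := hammingNorm_sub_hammingNorm_eq_sum (p := fun k x ↦ x ∈ W k)
    (g := fun x ↦ α * nonzeroUnionIndicator W x + φ x) (h := φ) fun x hx ↦
      existsUnique_mem_of_nonzeroUnionIndicator_ne_zero hdisj (by contrapose! hx; simp [hx])
  have weight_sub_restrict (k : ι) :
      (hammingNorm fun x : W k ↦ α * nonzeroUnionIndicator W x + φ x : ℤ) -
        (hammingNorm fun x : W k ↦ φ x) =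
      (if W k ≤ ker φ then Fintype.card (W k) else 0 : ℕ) - 1 := by
    have := hammingNorm_mul_nonzeroUnionIndicator_add_dual_restrict (W := W) hα φ k
    lia
  rw [sum_congr rfl fun k _ ↦ weight_sub_restrict k, sum_sub_distrib, ← Nat.cast_sum, ← sum_filter,
    sum_const, card_univ, nsmul_one] at weight_sub
  rw [hammingNorm_functionCodeword nonzeroUnionIndicator_zero]
  lia

end Code

section EqualDimensions

variable {F V ι : Type*} [Field F] [Fintype F] [AddCommGroup V] [Module F V]
  [Fintype V] [Fintype ι] [DecidableEq F] [DecidableEq V] {W : ι → Submodule F V} {t : ℕ}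

local notation "q" => Fintype.card F
local notation "s" => Fintype.card ι

open Classical in
lemma hammingNorm_functionCodeword_add_card_of_finrank_eq (hdim : ∀ k, finrank F (W k) = t)
    (hdisj : Pairwise (Function.onFun Disjoint W)) {α : F} (hα : α ≠ 0) (φ : Dual F V) :
    hammingNorm (functionCodeword (nonzeroUnionIndicator W) α φ) + s =
      hammingNorm φ + #{k | W k ≤ ker φ} * q ^ t := by
  have card_W (k : ι) : Fintype.card (W k) = q ^ t := by
    rw [Module.card_eq_pow_finrank (K := F), hdim]
  rw [hammingNorm_functionCodeword_add_card hdisj hα, sum_congr rfl fun k _ ↦ card_W k, sum_const,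
    smul_eq_mul]

lemma hammingNorm_functionCodeword_zero_right (hdim : ∀ k, finrank F (W k) = t)
    (hdisj : Pairwise (Function.onFun Disjoint W)) {α : F} (hα : α ≠ 0) :
    hammingNorm (functionCodeword (nonzeroUnionIndicator W) α 0) = s * (q ^ t - 1) := by
  classical
  have weight_add := hammingNorm_functionCodeword_add_card_of_finrank_eq hdim hdisj hα 0
  have weight_zero : hammingNorm (0 : Dual F V) = 0 := hammingNorm_zero
  simp only [weight_zero, ker_zero, le_top, filter_true, card_univ, zero_add] at weight_add
  rw [Nat.mul_sub_one]
  lia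

theorem isLeast_hammingNorm_functionCode [Nonempty ι] (ht : 0 < t) (hV : finrank F V = 2 * t)
    (hdim : ∀ k, finrank F (W k) = t) (hdisj : Pairwise (Function.onFun Disjoint W))
    (hs : s ≤ (q - 1) * q ^ (t - 1)) :
    IsLeast {m : ℕ | ∃ c ∈ functionCode (nonzeroUnionIndicator W), c ≠ 0 ∧ hammingNorm c = m}
      (s * (q ^ t - 1)) := by
  classical
  have hs_mul := mul_pow_le_mul_pow_of_le_mul_pow ht hs
  constructor
  · have weight := hammingNorm_functionCodeword_zero_right hdim hdisj (one_ne_zero (α := F))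
    refine ⟨_, ⟨1, 0, rfl⟩, hammingNorm_pos_iff.mp ?_, weight⟩
    have one_lt : 1 < q ^ t := Nat.one_lt_pow ht.ne' Fintype.one_lt_card
    rw [weight]
    exact Nat.mul_pos Fintype.card_pos (Nat.sub_pos_of_lt one_lt)
  · rintro _ ⟨_, ⟨α, φ, rfl⟩, hc, rfl⟩
    rcases eq_or_ne α 0 with rfl | hα <;> rcases eq_or_ne φ 0 with rfl | hφ
    · exact absurd (functionCodeword_zero_zero _) hc
    · rw [hammingNorm_functionCodeword_zero_left, hammingNorm_dual hφ, hV, Nat.mul_sub_one]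
      lia
    · exact (hammingNorm_functionCodeword_zero_right hdim hdisj hα).ge
    · have weight := hammingNorm_functionCodeword_add_card_of_finrank_eq hdim hdisj hα φ
      rw [hammingNorm_dual hφ, hV] at weight
      rw [Nat.mul_sub_one]
      lia

theorem isGreatest_hammingNorm_functionCode [Nonempty ι] (ht : 0 < t) (hV : finrank F V = 2 * t)
    (hdim : ∀ k, finrank F (W k) = t) (hdisj : Pairwise (Function.onFun Disjoint W))
    (hs : s ≤ (q - 1) * q ^ (t - 1)) :
    IsGreatest {m : ℕ | ∃ c ∈ functionCode (nonzeroUnionIndicator W), hammingNorm c = m}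
      ((q - 1) * q ^ (2 * t - 1) + q ^ t - s) := by
  classical
  have hs_mul := mul_pow_le_mul_pow_of_le_mul_pow ht hs
  have hcodisj := pairwise_codisjoint_of_finrank_le_two_mul hV.le hdim hdisj
  have hs_pow := le_pow_of_le_sub_one_mul_pow ht hs
  constructor
  · obtain ⟨k⟩ := ‹Nonempty ι›
    have lt_top : W k < ⊤ := Submodule.lt_top_of_finrank_lt_finrank (by rw [hdim]; lia)
    obtain ⟨φ, hφ, card_eq_one⟩ := exists_dual_card_le_ker_eq_one hcodisj lt_top
    refine ⟨_, ⟨1, φ, rfl⟩, ?_⟩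
    have weight := hammingNorm_functionCodeword_add_card_of_finrank_eq hdim hdisj one_ne_zero φ
    rw [hammingNorm_dual hφ, hV, card_eq_one] at weight
    lia
  · rintro _ ⟨_, ⟨α, φ, rfl⟩, rfl⟩
    rcases eq_or_ne α 0 with rfl | hα <;> rcases eq_or_ne φ 0 with rfl | hφ
    · simp [functionCodeword_zero_zero]
    · rw [hammingNorm_functionCodeword_zero_left, hammingNorm_dual hφ, hV]
      lia
    · rw [hammingNorm_functionCodeword_zero_right hdim hdisj hα, Nat.mul_sub_one]
      lia
    · have weight := hammingNorm_functionCodeword_add_card_of_finrank_eq hdim hdisj hα φ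
      have card_mul_le : #{k | W k ≤ ker φ} * q ^ t ≤ 1 * q ^ t := by
        gcongr
        exact card_le_ker_le_one_of_pairwise_codisjoint hcodisj hφ
      rw [hammingNorm_dual hφ, hV] at weight
      lia

theorem stmt3_general [Nonempty ι] (ht : 2 ≤ t) (hV : finrank F V = 2 * t)
    (hdim : ∀ k, finrank F (W k) = t) (hdisj : Pairwise (Function.onFun Disjoint W))
    (hs : s ≤ (q - 1) * q ^ (t - 2)) :
    IsLeast {m : ℕ | ∃ c ∈ functionCode (nonzeroUnionIndicator W), c ≠ 0 ∧ hammingNorm c = m}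
      (s * (q ^ t - 1)) ∧
    IsGreatest {m : ℕ | ∃ c ∈ functionCode (nonzeroUnionIndicator W), hammingNorm c = m}
      ((q - 1) * q ^ (2 * t - 1) + q ^ t - s) ∧
    q * (s * (q ^ t - 1)) ≤ (q - 1) * q ^ (2 * t - 1) + q ^ t - s := by
  have hs' : s ≤ (q - 1) * q ^ (t - 1) :=
    hs.trans (Nat.mul_le_mul_left _ (Nat.pow_le_pow_right Fintype.card_pos (by lia)))
  exact ⟨isLeast_hammingNorm_functionCode (by lia) hV hdim hdisj hs',
    isGreatest_hammingNorm_functionCode (by lia) hV hdim hdisj hs',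
    mul_mul_pow_sub_one_le ht Fintype.card_pos hs⟩

end EqualDimensions

theorem stmt3 (t n s : ℕ) (ht : n = 2 * t) (hn : 6 ≤ n) (hs : 1 ≤ s)
    (hs2 : s ≤ 3 ^ (t - 2))
    (W : Fin s → Submodule (ZMod 3) (Fin n → ZMod 3))
    (hdim : ∀ k, Module.finrank (ZMod 3) (W k) = t)
    (hdisj : ∀ i j, i ≠ j → W i ⊓ W j = ⊥)
    (f : (Fin n → ZMod 3) → ZMod 3)
    (hf1 : ∀ (x : Fin n → ZMod 3) (k : Fin s), x ≠ 0 → x ∈ W k → f x = 1)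
    (hf0 : ∀ x : Fin n → ZMod 3, (x = 0 ∨ ∀ k, x ∉ W k) → f x = 0)
    (C : Set ({x : Fin n → ZMod 3 // x ≠ 0} → ZMod 3))
    (hC : C = {c | ∃ (α : ZMod 3) (w : Fin n → ZMod 3),
      c = fun x => α * f x.1 + w ⬝ᵥ x.1})
    :
    IsLeast {m : ℕ | ∃ c ∈ C, c ≠ 0 ∧ hammingNorm c = m} (s * (3 ^ t - 1)) ∧
    IsGreatest {m : ℕ | ∃ c ∈ C, hammingNorm c = m} (2 * 3 ^ (n - 1) + 3 ^ t - s) ∧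
    3 * (s * (3 ^ t - 1)) ≤ 2 * 3 ^ (n - 1) + 3 ^ t - s := by
  have : Fact (Nat.Prime 3) := ⟨Nat.prime_three⟩
  have : Nonempty (Fin s) := ⟨⟨0, hs⟩⟩
  rw [hC, ← functionCode_eq_setOf_dotProduct, eq_nonzeroUnionIndicator hf1 hf0]
  simpa only [Fintype.card_fin, ZMod.card, ← ht] using
    stmt3_general (by lia) (by simpa using ht) hdim
      (fun i j hij ↦ disjoint_iff.mpr (hdisj i j hij))
      (by simp only [Fintype.card_fin, ZMod.card]; lia)
end

section
/- Let n = 2t be an even integer with n ≥ 6, let s ≥ 1 be an integer with 2s ≠ 3^t + 1, and let W_1, …, W_{2s} be pairwise disjoint t-dimensional F_3-linear subspaces of F_3^n, with f the associated ternary partial-spread function. Then for all pairwise distinct w_1, w_2, w_3 ∈ F_3^n with w_1 + w_2 + w_3 = 0, one has Re(f̂(w_1)) + Re(f̂(w_2)) − 2·Re(f̂(w_3)) ≠ 3^n. -/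
open Matrix Finset

/-!
Write `N φ` for the number of members of the spread on which the functional `φ` vanishes. The
function `ζ ^ f - 1` is constant on each `W k \ {0}` and vanishes elsewhere, so orthogonality of
characters on each `W k` evaluates the Walsh transform; since `Re (ζ ^ a - 1) = -3/2` for both
nonzero `a`, its real part only depends on `N φ` and on whether `φ = 0`. Two members of the spread
are complementary, hence `N φ ≤ 1` for `φ ≠ 0`. After division by `3 ^ t` the forbidden equality
becomes an integer equation between `3 ^ t`, the size of the spread and three values of `N`.
-/

section CharacterSum

variable {K V R : Type*} [Field K] [AddCommGroup V] [Module K V] [CommSemiring R]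

theorem compAddMonoidHom_linearMap_eq_zero_iff {ψ : AddChar K R} (hψ : ψ ≠ 0) (φ : V →ₗ[K] K) :
    ψ.compAddMonoidHom φ.toAddMonoidHom = 0 ↔ φ = 0 := by
  constructor
  · intro hφ
    by_contra hne
    refine hψ (DFunLike.ext _ _ fun a => ?_)
    obtain ⟨v, rfl⟩ := LinearMap.surjective hne a
    exact DFunLike.congr_fun hφ v
  · rintro rfl
    ext
    exact ψ.map_zero_eq_one

theorem sum_addChar_linearMap [Fintype V] [IsDomain R] {ψ : AddChar K R} (hψ : ψ ≠ 0)
    (φ : V →ₗ[K] K) [Decidable (φ = 0)] :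
    ∑ v, ψ (φ v) = if φ = 0 then (Nat.card V : R) else 0 := by
  classical
  simp only [Nat.card_eq_fintype_card, ← compAddMonoidHom_linearMap_eq_zero_iff hψ φ]
  exact AddChar.sum_eq_ite (ψ.compAddMonoidHom φ.toAddMonoidHom)

theorem sum_addChar_submodule [IsDomain R] {ψ : AddChar K R} (hψ : ψ ≠ 0) (U : Submodule K V)
    [Fintype U] (φ : Module.Dual K V) [Decidable (φ ∈ U.dualAnnihilator)] :
    ∑ u : U, ψ (φ u) = if φ ∈ U.dualAnnihilator then (Nat.card U : R) else 0 := by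
  classical
  simp only [← U.dualRestrict_ker_eq_dualAnnihilator, LinearMap.mem_ker]
  exact sum_addChar_linearMap hψ (U.dualRestrict φ)

end CharacterSum

/-- A partial spread of a `2t`-dimensional space: a family of `t`-dimensional subspaces which
pairwise meet only in `0`. -/
structure IsPartialSpread {K E κ : Type*} [Field K] [AddCommGroup E] [Module K E] (t : ℕ)
    (W : κ → Submodule K E) : Prop where
  finrank_space : Module.finrank K E = 2 * t
  finrank_member : ∀ k, Module.finrank K (W k) = t
  pairwise_disjoint : Pairwise (Function.onFun Disjoint W)

/-- `f` takes the value `c k` on `W k \ {0}` for every `k` and vanishes at all other points, in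
particular at `0`. -/
structure IsSpreadFunction {K E κ R : Type*} [Field K] [AddCommGroup E] [Module K E] [Zero R]
    (W : κ → Submodule K E) (c : κ → R) (f : E → R) : Prop where
  apply_of_mem : ∀ k, ∀ x ∈ W k, x ≠ 0 → f x = c k
  apply_of_forall : ∀ x, (∀ k, x ∈ W k → x = 0) → f x = 0

/-- The number of members of the family `W` on which the functional `φ` vanishes. -/
noncomputable def annihilatedCount {K E κ : Type*} [Field K] [AddCommGroup E] [Module K E]
    [Fintype κ] (W : κ → Submodule K E) (φ : Module.Dual K E) : ℕ :=
  open scoped Classical in #{k | φ ∈ (W k).dualAnnihilator}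

/-- The Walsh transform of `f` with respect to the additive character `ψ`. Frequencies are linear
functionals `φ`; the coordinate version is the case `φ x = w ⬝ᵥ x`. -/
noncomputable def walshTransform {K E : Type*} [Field K] [AddCommGroup E] [Module K E] [Fintype E]
    (ψ : AddChar K ℂ) (f : E → K) (φ : Module.Dual K E) : ℂ :=
  ∑ x, ψ (f x - φ x)

section PartialSpread

variable {K E κ R : Type*} [Field K] [AddCommGroup E] [Module K E] {W : κ → Submodule K E}

theorem IsSpreadFunction.comp [Zero R] {S : Type*} [Zero S] {c : κ → R} {f : E → R}
    (hf : IsSpreadFunction W c f) {g : R → S} (hg : g 0 = 0) :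
    IsSpreadFunction W (g ∘ c) (g ∘ f) where
  apply_of_mem k x hxk hx := congrArg g (hf.apply_of_mem k x hxk hx)
  apply_of_forall x hx := (congrArg g (hf.apply_of_forall x hx)).trans hg

variable [Fintype κ]

open scoped Classical in
theorem IsSpreadFunction.apply_eq_sum [AddCommMonoid R] {c : κ → R} {f : E → R}
    (hf : IsSpreadFunction W c f) (hW : Pairwise (Function.onFun Disjoint W)) (x : E) :
    f x = ∑ k, if x ∈ W k ∧ x ≠ 0 then c k else 0 := by
  by_cases hx : ∃ k, x ∈ W k ∧ x ≠ 0
  · obtain ⟨k, hxk, hx0⟩ := hx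
    have mem_iff (j : κ) : x ∈ W j ↔ j = k := by
      refine ⟨fun hxj => ?_, fun hjk => hjk ▸ hxk⟩
      by_contra hjk
      exact hx0 (Submodule.disjoint_def.1 (hW hjk) x hxj hxk)
    simp [mem_iff, hx0, hf.apply_of_mem k x hxk hx0]
  · push Not at hx
    rw [hf.apply_of_forall x hx, sum_eq_zero]
    exact fun k _ => if_neg fun h => h.2 (hx k h.1)

open scoped Classical in
theorem IsSpreadFunction.sum_mul_eq [Fintype E] [Ring R] {c : κ → R} {f : E → R}
    (hf : IsSpreadFunction W c f) (hW : Pairwise (Function.onFun Disjoint W)) (g : E → R) :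
    ∑ x, f x * g x = ∑ k, c k * (∑ x : W k, g x - g 0) := by
  have sum_nonzero (k : κ) :
      ∑ x with x ∈ W k ∧ x ≠ 0, g x = ∑ x : W k, g x - g 0 := by
    rw [← filter_filter, filter_ne', ← add_sub_cancel_left (g 0) (∑ x ∈ _, g x),
      add_sum_erase _ g (by simp), sum_subtype (p := (· ∈ W k)) _ (by simp)]
  calc ∑ x, f x * g x
      = ∑ x, ∑ k, if x ∈ W k ∧ x ≠ 0 then c k * g x else 0 := by
        simp only [hf.apply_eq_sum hW, sum_mul, ite_mul, zero_mul]
    _ = ∑ k, c k * ∑ x with x ∈ W k ∧ x ≠ 0, g x := by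
        rw [sum_comm]
        simp only [← sum_filter, mul_sum]
    _ = ∑ k, c k * (∑ x : W k, g x - g 0) := by simp only [sum_nonzero]

open scoped Classical in
theorem IsSpreadFunction.walshTransform_eq [Fintype E] {c : κ → K} {f : E → K}
    (hf : IsSpreadFunction W c f) (hW : Pairwise (Function.onFun Disjoint W))
    {ψ : AddChar K ℂ} (hψ : ψ ≠ 0) (φ : Module.Dual K E) :
    walshTransform ψ f φ = (if φ = 0 then (Nat.card E : ℂ) else 0) +
      ∑ k, (ψ (c k) - 1) *
        ((if φ ∈ (W k).dualAnnihilator then (Nat.card (W k) : ℂ) else 0) - 1) := by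
  have hf' : IsSpreadFunction W (fun k => ψ (c k) - 1) (fun x => ψ (f x) - 1) :=
    hf.comp (g := fun a => ψ a - 1) (by simp)
  calc walshTransform ψ f φ
      = ∑ x, ψ ((-φ) x) + ∑ x, (ψ (f x) - 1) * ψ ((-φ) x) := by
        rw [← sum_add_distrib]
        refine sum_congr rfl fun x _ => ?_
        rw [sub_eq_add_neg, ψ.map_add_eq_mul, LinearMap.neg_apply]
        ring
    _ = _ := by
        simp only [hf'.sum_mul_eq hW, sum_addChar_linearMap hψ, sum_addChar_submodule hψ,
          neg_eq_zero, neg_mem_iff, map_zero, AddChar.map_zero_eq_one]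

theorem annihilatedCount_zero (W : κ → Submodule K E) :
    annihilatedCount W 0 = Fintype.card κ := by
  simp [annihilatedCount]

theorem annihilatedCount_neg (W : κ → Submodule K E) (φ : Module.Dual K E) :
    annihilatedCount W (-φ) = annihilatedCount W φ := by
  classical exact congrArg card (filter_congr fun _ _ => neg_mem_iff)

theorem IsPartialSpread.annihilatedCount_le_one [FiniteDimensional K E] {t : ℕ}
    (hW : IsPartialSpread t W) {φ : Module.Dual K E} (hφ : φ ≠ 0) : annihilatedCount W φ ≤ 1 := by
  classical
  refine card_le_one.2 fun i hi j hj => ?_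
  by_contra hij
  have hdim : Module.finrank K (W i) + Module.finrank K (W j) = Module.finrank K E := by
    rw [hW.finrank_member, hW.finrank_member, hW.finrank_space, two_mul]
  have hcompl : IsCompl (W i) (W j) :=
    (Submodule.isCompl_iff_disjoint _ _ hdim.ge).2 (hW.pairwise_disjoint hij)
  exact hφ (Submodule.disjoint_def.1 (Subspace.isCompl_dualAnnihilator hcompl).disjoint φ
    (mem_filter.1 hi).2 (mem_filter.1 hj).2)

end PartialSpread

theorem re_eq_neg_half_of_pow_three_eq_one {z : ℂ} (hz : z ^ 3 = 1) (hz1 : z ≠ 1) :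
    z.re = -1 / 2 := by
  have hconj : z ^ 2 = (starRingEnd ℂ) z := by
    rw [← Complex.inv_eq_conj (Complex.norm_eq_one_of_pow_eq_one hz three_ne_zero)]
    exact eq_inv_of_mul_eq_one_left (by rw [← pow_succ, hz])
  have hgeom : 1 + z + z ^ 2 = 0 := by
    refine (mul_eq_zero.1 ?_).resolve_left (sub_ne_zero.2 hz1)
    linear_combination hz
  have hre := congrArg Complex.re hgeom
  rw [hconj, Complex.add_re, Complex.add_re, Complex.conj_re, Complex.one_re,
    Complex.zero_re] at hre
  linarith

theorem re_stdAddChar_zmod_three {a : ZMod 3} (ha : a ≠ 0) :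
    (ZMod.stdAddChar a : ℂ).re = -1 / 2 := by
  apply re_eq_neg_half_of_pow_three_eq_one
  · rw [← AddChar.map_nsmul_eq_pow, ZModModule.char_nsmul_eq_zero, AddChar.map_zero_eq_one]
  · rwa [← AddChar.map_zero_eq_one (ZMod.stdAddChar (N := 3)), ZMod.injective_stdAddChar.ne_iff]

theorem stdAddChar_ne_zero {N : ℕ} [NeZero N] [Nontrivial (ZMod N)] :
    (ZMod.stdAddChar : AddChar (ZMod N) ℂ) ≠ 0 := by
  rw [← AddChar.one_eq_zero, ← AddChar.mulShift_one ZMod.stdAddChar]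
  exact ZMod.isPrimitive_stdAddChar N one_ne_zero

section Ternary

variable {E κ : Type*} [AddCommGroup E] [Module (ZMod 3) E] [Fintype E] [Fintype κ]
  {t : ℕ} {W : κ → Submodule (ZMod 3) E} {c : κ → ZMod 3} {f : E → ZMod 3}

open scoped Classical in
theorem IsPartialSpread.re_walshTransform (hW : IsPartialSpread t W)
    (hf : IsSpreadFunction W c f) (hc : ∀ k, c k ≠ 0) (φ : Module.Dual (ZMod 3) E) :
    (walshTransform ZMod.stdAddChar f φ).re = (if φ = 0 then (3 : ℝ) ^ (2 * t) else 0) -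
      3 / 2 * (3 ^ t * annihilatedCount W φ - Fintype.card κ) := by
  have card_space : Nat.card E = 3 ^ (2 * t) := by
    rw [Module.natCard_eq_pow_finrank (K := ZMod 3), hW.finrank_space, Nat.card_zmod]
  have card_member (k : κ) : Nat.card (W k) = 3 ^ t := by
    rw [Module.natCard_eq_pow_finrank (K := ZMod 3), hW.finrank_member, Nat.card_zmod]
  have re_value (k : κ) : (ZMod.stdAddChar (c k) - 1 : ℂ).re = -3 / 2 := by
    rw [Complex.sub_re, re_stdAddChar_zmod_three (hc k), Complex.one_re]
    norm_num
  have re_summand (k : κ) (b : ℝ) :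
      ((ZMod.stdAddChar (c k) - 1 : ℂ) * b).re = -3 / 2 * b := by
    rw [Complex.re_mul_ofReal, re_value]
  have walsh_eq : walshTransform ZMod.stdAddChar f φ =
      ((if φ = 0 then (3 : ℝ) ^ (2 * t) else 0 : ℝ) : ℂ) + ∑ k, (ZMod.stdAddChar (c k) - 1) *
        (((if φ ∈ (W k).dualAnnihilator then (3 : ℝ) ^ t else 0) - 1 : ℝ) : ℂ) := by
    rw [hf.walshTransform_eq hW.pairwise_disjoint stdAddChar_ne_zero]
    simp only [card_space, card_member]
    push_cast [apply_ite Complex.ofReal]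
    rfl
  rw [walsh_eq, Complex.add_re, Complex.ofReal_re, Complex.re_sum]
  simp only [re_summand, ← mul_sum, sum_sub_distrib, ← sum_filter, sum_const, nsmul_eq_mul,
    card_univ, annihilatedCount]
  ring

open scoped Classical in
/-- The hypothesis `h`, divided by `3 ^ t / 2`. -/
theorem IsPartialSpread.int_eq_of_re_walshTransform_eq (hW : IsPartialSpread t W)
    (hf : IsSpreadFunction W c f) (hc : ∀ k, c k ≠ 0) {φ₁ φ₂ φ₃ : Module.Dual (ZMod 3) E}
    (h : (walshTransform ZMod.stdAddChar f φ₁).re + (walshTransform ZMod.stdAddChar f φ₂).re -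
      2 * (walshTransform ZMod.stdAddChar f φ₃).re = 3 ^ (2 * t)) :
    2 * 3 ^ t * ((if φ₁ = 0 then 1 else 0) + (if φ₂ = 0 then 1 else 0) -
        2 * (if φ₃ = 0 then 1 else 0) - 1 : ℤ) =
      3 * (annihilatedCount W φ₁ + annihilatedCount W φ₂ - 2 * annihilatedCount W φ₃) := by
  have hpow : (3 : ℝ) ^ t ≠ 0 := by positivity
  simp only [hW.re_walshTransform hf hc, two_mul t, pow_add,
    ← mul_boole _ ((3 : ℝ) ^ t * 3 ^ t)] at h
  apply Int.cast_injective (α := ℝ)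
  push_cast
  apply mul_left_cancel₀ hpow
  linear_combination 2 * h

theorem stmt8_general (hW : IsPartialSpread t W) (hf : IsSpreadFunction W c f)
    (hc : ∀ k, c k ≠ 0) (ht : 2 ≤ t) (hκ : 2 ≤ Fintype.card κ) (hκ₀ : Fintype.card κ ≠ 3 ^ t)
    (hκ₁ : Fintype.card κ ≠ 3 ^ t + 1) {φ₁ φ₂ φ₃ : Module.Dual (ZMod 3) E} (hne : φ₁ ≠ φ₂)
    (hsum : φ₁ + φ₂ + φ₃ = 0) :
    (walshTransform ZMod.stdAddChar f φ₁).re + (walshTransform ZMod.stdAddChar f φ₂).re -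
      2 * (walshTransform ZMod.stdAddChar f φ₃).re ≠ 3 ^ (2 * t) := by
  intro h
  have key := hW.int_eq_of_re_walshTransform_eq hf hc h
  obtain rfl : φ₃ = -(φ₁ + φ₂) := (neg_eq_of_add_eq_zero_right hsum).symm
  by_cases h₁ : φ₁ = 0
  · subst h₁
    rw [zero_add, annihilatedCount_neg, annihilatedCount_zero, if_pos rfl, if_neg hne.symm,
      if_neg (neg_ne_zero.2 hne.symm)] at key
    have hcount : Fintype.card κ = annihilatedCount W φ₂ := by omega
    have hle : Fintype.card κ ≤ 1 := hcount ▸ hW.annihilatedCount_le_one hne.symm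
    omega
  by_cases h₂ : φ₂ = 0
  · subst h₂
    rw [add_zero, annihilatedCount_neg, annihilatedCount_zero, if_pos rfl, if_neg h₁,
      if_neg (neg_ne_zero.2 h₁)] at key
    have hcount : Fintype.card κ = annihilatedCount W φ₁ := by omega
    have hle : Fintype.card κ ≤ 1 := hcount ▸ hW.annihilatedCount_le_one h₁
    omega
  by_cases h₃ : φ₁ + φ₂ = 0
  · obtain rfl : φ₂ = -φ₁ := (neg_eq_of_add_eq_zero_right h₃).symm
    rw [h₃, neg_zero, annihilatedCount_neg, annihilatedCount_zero, if_neg h₁, if_neg h₂,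
      if_pos rfl] at key
    have hcount : Fintype.card κ = 3 ^ t + annihilatedCount W φ₁ := by
      zify
      linarith
    have hle := hW.annihilatedCount_le_one h₁
    omega
  · rw [if_neg h₁, if_neg h₂, if_neg (neg_ne_zero.2 h₃)] at key
    have hle := hW.annihilatedCount_le_one (neg_ne_zero.2 h₃)
    have hpow_le : 3 ^ t ≤ 3 := by
      zify at hle ⊢
      linarith
    have hpow_ge : 3 ^ 2 ≤ 3 ^ t := Nat.pow_le_pow_right three_pos ht
    omega

end Ternary

theorem stdAddChar_zmod_three_eq_exp_pow (a : ZMod 3) :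
    ZMod.stdAddChar a = Complex.exp (2 * Real.pi * Complex.I / 3) ^ a.val := by
  rw [← Complex.exp_nat_mul]
  convert ZMod.stdAddChar_coe (N := 3) a.val using 2
  · simp
  · push_cast
    ring

theorem walshTransform_dotProductEquiv {ι : Type*} [Fintype ι] [DecidableEq ι]
    (f : (ι → ZMod 3) → ZMod 3) (w : ι → ZMod 3) :
    walshTransform ZMod.stdAddChar f (dotProductEquiv (ZMod 3) ι w) =
      ∑ x, Complex.exp (2 * Real.pi * Complex.I / 3) ^ (f x - w ⬝ᵥ x).val :=
  sum_congr rfl fun _ _ => stdAddChar_zmod_three_eq_exp_pow _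

theorem stmt8 (t n s : ℕ) (ht : n = 2 * t) (hn : 6 ≤ n) (hs : 1 ≤ s)
    (hs2 : 2 * s ≠ 3 ^ t + 1)
    (W : Fin (2 * s) → Submodule (ZMod 3) (Fin n → ZMod 3))
    (hdim : ∀ k, Module.finrank (ZMod 3) (W k) = t)
    (hdisj : ∀ i j, i ≠ j → W i ⊓ W j = ⊥)
    (f : (Fin n → ZMod 3) → ZMod 3)
    (hf1 : ∀ (x : Fin n → ZMod 3) (k : Fin (2 * s)), x ≠ 0 → x ∈ W k → (k : ℕ) < s → f x = 1)
    (hf2 : ∀ (x : Fin n → ZMod 3) (k : Fin (2 * s)), x ≠ 0 → x ∈ W k → s ≤ (k : ℕ) → f x = 2)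
    (hf0 : ∀ x : Fin n → ZMod 3, (x = 0 ∨ ∀ k, x ∉ W k) → f x = 0)
    (walsh : (Fin n → ZMod 3) → ℂ)
    (hwalsh : ∀ w : Fin n → ZMod 3, walsh w = ∑ x : Fin n → ZMod 3,
      Complex.exp (2 * Real.pi * Complex.I / 3) ^ ((f x - w ⬝ᵥ x).val))
    :
    ∀ w1 w2 w3 : Fin n → ZMod 3, w1 ≠ w2 → w1 ≠ w3 → w2 ≠ w3 → w1 + w2 + w3 = 0 →
      (walsh w1).re + (walsh w2).re - 2 * (walsh w3).re ≠ 3 ^ n := by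
  subst ht
  intro w₁ w₂ w₃ h₁₂ _ _ hsum
  have hW : IsPartialSpread t W :=
    ⟨Module.finrank_fin_fun _, hdim, fun i j hij => disjoint_iff.2 (hdisj i j hij)⟩
  have hf : IsSpreadFunction W (fun k => if (k : ℕ) < s then 1 else 2) f := by
    refine ⟨fun k x hxk hx => ?_, fun x hx => hf0 x ?_⟩
    · split_ifs with hks
      exacts [hf1 x k hx hxk hks, hf2 x k hx hxk (not_lt.1 hks)]
    · exact or_iff_not_imp_left.2 fun hx0 k hxk => hx0 (hx k hxk)
  have hc (k : Fin (2 * s)) : (if (k : ℕ) < s then 1 else 2 : ZMod 3) ≠ 0 := by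
    split_ifs <;> decide
  have hne_pow : 2 * s ≠ 3 ^ t := fun h =>
    Nat.not_even_iff_odd.2 (Odd.pow (by decide)) (h ▸ even_two_mul s)
  simp only [hwalsh, ← walshTransform_dotProductEquiv]
  refine stmt8_general hW hf hc (by omega) ?_ ?_ ?_ ((LinearEquiv.injective _).ne h₁₂)
    (by rw [← map_add, ← map_add, hsum, map_zero])
  all_goals rw [Fintype.card_fin]
  exacts [by omega, hne_pow, hs2]
end
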